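/- Let $S$ be a nonempty finite set of states, $U_1, U_2 \subseteq \mathbb{R}$ nonempty compact convex sets, $\alpha : S \to [0,1)$ with $\sup_{x} \alpha(x) < 1$ (state-dependent discount factors), $p : S \times S \times U_1 \times U_2 \to \mathbb{R}$ with $p(x,y|r_1,r_2) \ge 0$, $\sum_{y} p(x,y|r_1,r_2) = 1$, and for each $x, y$ the map $(r_1,r_2) \mapsto p(x,y|r_1,r_2)$ continuous and bilinear-affine in $(r_1,r_2)$ (i.e. of the form $a\,r_1 r_2 + b\,r_1 + c\,r_2 + d$), and $c : S \times U_1 \times U_2 \to \mathbb{R}$ with $(r_1,r_2) \mapsto c(x,r_1,r_2)$ continuous, convex-concave, and nonnegative. Define $(T^+V)(x) = \min_{r_1 \in U_1} \max_{r_2 \in U_2} \big[ c(x,r_1,r_2) + \alpha(x) \sum_{y} p(x,y|r_1,r_2) V(y) \big]$ and $(T^-V)(x) = \max_{r_2 \in U_2} \min_{r_1 \in U_1} \big[ c(x,r_1,r_2) + \alpha(x) \sum_{y} p(x,y|r_1,r_2) V(y) \big]$. Then $T^+$ and $T^-$ have unique fixed points $V^{+}$ and $V^{-}$, and $V^{+}(x)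 = V^{-}(x)$ for all $x \in S$: the approximating Markov game has a saddle point. -/

import Mathlib

/-!
For fixed `V` and `x`, the one-step payoff
`(r1, r2) ↦ c x r1 r2 + α x * ∑ y, p x y r1 r2 * V y` is continuous and convex-concave: each
`p x y` is affine in either control separately, so the sign of `V` is irrelevant. By Sion's
theorem (`Sion.exists_isSaddlePointOn`) it has a saddle point on the compact convex set
`U1 ×ˢ U2`, and the payoff there is both the min-max and the max-min
(`exists_saddle_value`). Hence the two Bellman operators are equal.

Saddle values are `1`-Lipschitz in the payoff for the sup norm (`saddle_value_le`), and replacing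
`V` by `W` changes the payoff by at most `α x * dist V W`. The common operator is therefore a
contraction of `S → ℝ` with the sup metric (`upperBellmanSD_contracting`), so Banach's theorem gives
one fixed point, shared by both operators.
-/

/-- The upper Bellman operator with state-dependent discount factors:
`(T⁺V)(x) = min_{r1 ∈ U1} max_{r2 ∈ U2} [c(x,r1,r2) + α(x) ∑_y p(x,y|r1,r2) V(y)]`. -/
noncomputable def upperBellmanSD {S : Type*} [Fintype S] (U1 U2 : Set ℝ)
    (α : S → ℝ) (p : S → S → ℝ → ℝ → ℝ) (c : S → ℝ → ℝ → ℝ)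
    (V : S → ℝ) (x : S) : ℝ :=
  sInf {z | ∃ r1 ∈ U1, z = sSup {w | ∃ r2 ∈ U2,
    w = c x r1 r2 + α x * ∑ y, p x y r1 r2 * V y}}

/-- The lower Bellman operator with state-dependent discount factors:
`(T⁻V)(x) = max_{r2 ∈ U2} min_{r1 ∈ U1} [c(x,r1,r2) + α(x) ∑_y p(x,y|r1,r2) V(y)]`. -/
noncomputable def lowerBellmanSD {S : Type*} [Fintype S] (U1 U2 : Set ℝ)
    (α : S → ℝ) (p : S → S → ℝ → ℝ → ℝ) (c : S → ℝ → ℝ → ℝ)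
    (V : S → ℝ) (x : S) : ℝ :=
  sSup {z | ∃ r2 ∈ U2, z = sInf {w | ∃ r1 ∈ U1,
    w = c x r1 r2 + α x * ∑ y, p x y r1 r2 * V y}}

/-- The payoff of the one-step game at state `x` with continuation value `V`. -/
noncomputable def stagePayoff {S : Type*} [Fintype S]
    (α : S → ℝ) (p : S → S → ℝ → ℝ → ℝ) (c : S → ℝ → ℝ → ℝ)
    (V : S → ℝ) (x : S) (r1 r2 : ℝ) : ℝ :=
  c x r1 r2 + α x * ∑ y, p x y r1 r2 * V y

theorem minmax_eq_of_saddle {X Y : Set ℝ} {f : ℝ → ℝ → ℝ} {a b : ℝ} (ha : a ∈ X) (hb : b ∈ Y)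
    (hbdd : ∀ r1 ∈ X, BddAbove (f r1 '' Y)) (h : IsSaddlePointOn X Y f a b) :
    sInf {z | ∃ r1 ∈ X, z = sSup {w | ∃ r2 ∈ Y, w = f r1 r2}} = f a b := by
  have himg : ∀ r1, {w | ∃ r2 ∈ Y, w = f r1 r2} = f r1 '' Y := fun r1 => by
    ext w; simp [eq_comm]
  simp only [himg]
  refine IsLeast.csInf_eq ⟨⟨a, ha, ?_⟩, ?_⟩
  · refine Eq.symm (IsGreatest.csSup_eq ⟨⟨b, hb, rfl⟩, ?_⟩)
    rintro _ ⟨r2, hr2, rfl⟩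
    exact h a ha r2 hr2
  · rintro _ ⟨r1, hr1, rfl⟩
    exact (h r1 hr1 b hb).trans (le_csSup (hbdd r1 hr1) ⟨b, hb, rfl⟩)

theorem maxmin_eq_of_saddle {X Y : Set ℝ} {f : ℝ → ℝ → ℝ} {a b : ℝ} (ha : a ∈ X) (hb : b ∈ Y)
    (hbdd : ∀ r2 ∈ Y, BddBelow ((fun r1 => f r1 r2) '' X)) (h : IsSaddlePointOn X Y f a b) :
    sSup {z | ∃ r2 ∈ Y, z = sInf {w | ∃ r1 ∈ X, w = f r1 r2}} = f a b := by
  have himg : ∀ r2, {w | ∃ r1 ∈ X, w = f r1 r2} = (fun r1 => f r1 r2) '' X := fun r2 => by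
    ext w; simp [eq_comm]
  simp only [himg]
  refine IsGreatest.csSup_eq ⟨⟨b, hb, ?_⟩, ?_⟩
  · refine Eq.symm (IsLeast.csInf_eq ⟨⟨a, ha, rfl⟩, ?_⟩)
    rintro _ ⟨r1, hr1, rfl⟩
    exact h r1 hr1 b hb
  · rintro _ ⟨r2, hr2, rfl⟩
    exact (csInf_le (hbdd r2 hr2) ⟨a, ha, rfl⟩).trans (h a ha r2 hr2)

/-- Saddle values are monotone in the payoff up to an additive error: compare at the pair
made of the minimizer for `g` and the maximizer for `f`. -/
theorem saddle_value_le {X Y : Set ℝ} {f g : ℝ → ℝ → ℝ} {a b a' b' δ : ℝ}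
    (hb : b ∈ Y) (ha' : a' ∈ X)
    (hf : IsSaddlePointOn X Y f a b) (hg : IsSaddlePointOn X Y g a' b')
    (hfg : ∀ r1 ∈ X, ∀ r2 ∈ Y, f r1 r2 ≤ g r1 r2 + δ) : f a b ≤ g a' b' + δ := by
  have h1 := hf a' ha' b hb
  have h2 := hfg a' ha' b hb
  have h3 := hg a' ha' b hb
  linarith

section Game

variable {S : Type*} [Fintype S] {U1 U2 : Set ℝ} {α : S → ℝ}
  {p : S → S → ℝ → ℝ → ℝ} {c : S → ℝ → ℝ → ℝ}

/-- A bilinear-affine kernel integrates any `V` to a bilinear-affine function of the controls. -/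
theorem exists_bilinear_sum
    (hpbil : ∀ x y, ∃ ca cb cc cd : ℝ, ∀ r1 r2 : ℝ,
        p x y r1 r2 = ca * r1 * r2 + cb * r1 + cc * r2 + cd)
    (V : S → ℝ) (x : S) : ∃ ca cb cc cd : ℝ, ∀ r1 r2 : ℝ,
      α x * ∑ y, p x y r1 r2 * V y = ca * r1 * r2 + cb * r1 + cc * r2 + cd := by
  choose A B C D h using hpbil
  refine ⟨α x * ∑ y, A x y * V y, α x * ∑ y, B x y * V y, α x * ∑ y, C x y * V y,
    α x * ∑ y, D x y * V y, fun r1 r2 => ?_⟩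
  simp only [h, Finset.mul_sum, Finset.sum_mul, ← Finset.sum_add_distrib]
  exact Finset.sum_congr rfl fun y _ => by ring

theorem convexOn_affine {X : Set ℝ} (hX : Convex ℝ X) (m k : ℝ) :
    ConvexOn ℝ X (fun r => m * r + k) :=
  ⟨hX, fun u _ v _ s t _ _ hst => le_of_eq (by
    obtain rfl : t = 1 - s := by linarith
    simp only [smul_eq_mul]; ring)⟩

theorem concaveOn_affine {X : Set ℝ} (hX : Convex ℝ X) (m k : ℝ) :
    ConcaveOn ℝ X (fun r => m * r + k) :=
  ⟨hX, fun u _ v _ s t _ _ hst => le_of_eq (by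
    obtain rfl : t = 1 - s := by linarith
    simp only [smul_eq_mul]; ring)⟩

/-- The one-step game has a saddle point, and its value is computed by both Bellman operators. -/
theorem exists_saddle_value
    (hU1ne : U1.Nonempty) (hU1cp : IsCompact U1) (hU1cv : Convex ℝ U1)
    (hU2ne : U2.Nonempty) (hU2cp : IsCompact U2) (hU2cv : Convex ℝ U2)
    (hpbil : ∀ x y, ∃ ca cb cc cd : ℝ, ∀ r1 r2 : ℝ,
        p x y r1 r2 = ca * r1 * r2 + cb * r1 + cc * r2 + cd)
    (hccont : ∀ x, ContinuousOn (fun r : ℝ × ℝ => c x r.1 r.2) (U1 ×ˢ U2))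
    (hcconv : ∀ x, ∀ r2 ∈ U2, ConvexOn ℝ U1 (fun r1 => c x r1 r2))
    (hcconc : ∀ x, ∀ r1 ∈ U1, ConcaveOn ℝ U2 (fun r2 => c x r1 r2))
    (V : S → ℝ) (x : S) :
    ∃ a ∈ U1, ∃ b ∈ U2, IsSaddlePointOn U1 U2 (stagePayoff α p c V x) a b ∧
      upperBellmanSD U1 U2 α p c V x = stagePayoff α p c V x a b ∧
      lowerBellmanSD U1 U2 α p c V x = stagePayoff α p c V x a b := by
  obtain ⟨A, B, C, D, h⟩ := exists_bilinear_sum (α := α) hpbil V x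
  have hf : ∀ r1 r2, stagePayoff α p c V x r1 r2
      = c x r1 r2 + (A * r1 * r2 + B * r1 + C * r2 + D) := fun r1 r2 => by
    rw [stagePayoff, h]
  have hcont1 : ∀ r2 ∈ U2, ContinuousOn (fun r1 => stagePayoff α p c V x r1 r2) U1 := by
    intro r2 hr2
    simp only [hf]
    refine ContinuousOn.add ?_ (by fun_prop)
    exact (hccont x).comp (f := fun r1 => (r1, r2)) (by fun_prop) fun r1 hr1 => ⟨hr1, hr2⟩
  have hcont2 : ∀ r1 ∈ U1, ContinuousOn (fun r2 => stagePayoff α p c V x r1 r2) U2 := by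
    intro r1 hr1
    simp only [hf]
    refine ContinuousOn.add ?_ (by fun_prop)
    exact (hccont x).comp (f := fun r2 => (r1, r2)) (by fun_prop) fun r2 hr2 => ⟨hr1, hr2⟩
  have hconv : ∀ r2 ∈ U2, ConvexOn ℝ U1 (fun r1 => stagePayoff α p c V x r1 r2) := by
    intro r2 hr2
    refine ((hcconv x r2 hr2).add (convexOn_affine hU1cv (A * r2 + B) (C * r2 + D))).congr
      fun r1 _ => ?_
    simp only [hf, Pi.add_apply]; ring
  have hconc : ∀ r1 ∈ U1, ConcaveOn ℝ U2 (fun r2 => stagePayoff α p c V x r1 r2) := by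
    intro r1 hr1
    refine ((hcconc x r1 hr1).add (concaveOn_affine hU2cv (A * r1 + C) (B * r1 + D))).congr
      fun r2 _ => ?_
    simp only [hf, Pi.add_apply]; ring
  obtain ⟨a, ha, b, hb, hab⟩ := Sion.exists_isSaddlePointOn hU1ne hU1cv hU1cp
    (fun r2 hr2 => (hcont1 r2 hr2).lowerSemicontinuousOn)
    (fun r2 hr2 => (hconv r2 hr2).quasiconvexOn) hU2cv hU2ne hU2cp
    (fun r1 hr1 => (hcont2 r1 hr1).upperSemicontinuousOn)
    (fun r1 hr1 => (hconc r1 hr1).quasiconcaveOn)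
  exact ⟨a, ha, b, hb, hab,
    minmax_eq_of_saddle ha hb (fun r1 hr1 => hU2cp.bddAbove_image (hcont2 r1 hr1)) hab,
    maxmin_eq_of_saddle ha hb (fun r2 hr2 => hU1cp.bddBelow_image (hcont1 r2 hr2)) hab⟩

/-- Averaging against a probability vector is `1`-Lipschitz, so the continuation value enters the
payoff with Lipschitz constant `α x`. -/
theorem stagePayoff_le (hα0 : ∀ x, 0 ≤ α x)
    (hpnn : ∀ x y, ∀ r1 ∈ U1, ∀ r2 ∈ U2, 0 ≤ p x y r1 r2)
    (hpsum : ∀ x, ∀ r1 ∈ U1, ∀ r2 ∈ U2, (∑ y, p x y r1 r2) = 1)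
    (V W : S → ℝ) (x : S) (r1 : ℝ) (hr1 : r1 ∈ U1) (r2 : ℝ) (hr2 : r2 ∈ U2) :
    stagePayoff α p c V x r1 r2 ≤ stagePayoff α p c W x r1 r2 + α x * dist V W := by
  have hVW : ∀ y, V y ≤ W y + dist V W := fun y => by
    have h1 := dist_le_pi_dist V W y
    have h2 := le_abs_self (V y - W y)
    rw [Real.dist_eq] at h1
    linarith
  have hsum : ∑ y, p x y r1 r2 * V y ≤ (∑ y, p x y r1 r2 * W y) + dist V W := calc
    ∑ y, p x y r1 r2 * V y ≤ ∑ y, p x y r1 r2 * (W y + dist V W) :=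
      Finset.sum_le_sum fun y _ => mul_le_mul_of_nonneg_left (hVW y) (hpnn x y r1 hr1 r2 hr2)
    _ = (∑ y, p x y r1 r2 * W y) + dist V W := by
      simp only [mul_add, Finset.sum_add_distrib, ← Finset.sum_mul, hpsum x r1 hr1 r2 hr2, one_mul]
  have := mul_le_mul_of_nonneg_left hsum (hα0 x)
  simp only [stagePayoff]
  linarith

theorem upperBellmanSD_contracting [Nonempty S]
    (hU1ne : U1.Nonempty) (hU1cp : IsCompact U1) (hU1cv : Convex ℝ U1)
    (hU2ne : U2.Nonempty) (hU2cp : IsCompact U2) (hU2cv : Convex ℝ U2)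
    (hα0 : ∀ x, 0 ≤ α x) {α0 : ℝ} (hα01 : α0 < 1) (hα : ∀ x, α x ≤ α0)
    (hpnn : ∀ x y, ∀ r1 ∈ U1, ∀ r2 ∈ U2, 0 ≤ p x y r1 r2)
    (hpsum : ∀ x, ∀ r1 ∈ U1, ∀ r2 ∈ U2, (∑ y, p x y r1 r2) = 1)
    (hpbil : ∀ x y, ∃ ca cb cc cd : ℝ, ∀ r1 r2 : ℝ,
        p x y r1 r2 = ca * r1 * r2 + cb * r1 + cc * r2 + cd)
    (hccont : ∀ x, ContinuousOn (fun r : ℝ × ℝ => c x r.1 r.2) (U1 ×ˢ U2))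
    (hcconv : ∀ x, ∀ r2 ∈ U2, ConvexOn ℝ U1 (fun r1 => c x r1 r2))
    (hcconc : ∀ x, ∀ r1 ∈ U1, ConcaveOn ℝ U2 (fun r2 => c x r1 r2)) :
    ContractingWith α0.toNNReal (upperBellmanSD U1 U2 α p c) := by
  have h0 : 0 ≤ α0 := (hα0 (Classical.arbitrary S)).trans (hα _)
  refine ⟨by simpa using hα01, LipschitzWith.of_dist_le_mul fun V W => ?_⟩
  rw [Real.coe_toNNReal _ h0]
  refine (dist_pi_le_iff (by positivity)).2 fun x => ?_
  have key : ∀ V W : S → ℝ, upperBellmanSD U1 U2 α p c V x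
      ≤ upperBellmanSD U1 U2 α p c W x + α0 * dist V W := by
    intro V W
    obtain ⟨a, ha, b, hb, hab, hV, -⟩ := exists_saddle_value (α := α) hU1ne hU1cp hU1cv
      hU2ne hU2cp hU2cv hpbil hccont hcconv hcconc V x
    obtain ⟨a', ha', b', hb', hab', hW, -⟩ := exists_saddle_value (α := α) hU1ne hU1cp hU1cv
      hU2ne hU2cp hU2cv hpbil hccont hcconv hcconc W x
    have h1 := saddle_value_le hb ha' hab hab' (stagePayoff_le hα0 hpnn hpsum V W x)
    have h2 := mul_le_mul_of_nonneg_right (hα x) (dist_nonneg (x := V) (y := W))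
    rw [hV, hW]
    linarith
  have h1 := key V W
  have h2 := key W V
  rw [dist_comm W V] at h2
  rw [Real.dist_eq, abs_le]
  constructor <;> linarith

end Game

/-- **Saddle point of the approximating Markov game** (Theorem 3 of the paper in
dynamic-programming form).  With state-dependent discount factors bounded away
from `1`, transition probabilities that are bilinear-affine in the two players'
controls (drift assumption (A7)), and a continuous, convex-concave, nonnegative
running cost, the upper and lower Bellman operators have unique fixed points and
these coincide: the approximating Markov game has a saddle point. -/
theorem approximating_markov_game_saddle_point
    {S : Type*} [Fintype S] [Nonempty S]
    (U1 U2 : Set ℝ)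
    (hU1ne : U1.Nonempty) (hU1cp : IsCompact U1) (hU1cv : Convex ℝ U1)
    (hU2ne : U2.Nonempty) (hU2cp : IsCompact U2) (hU2cv : Convex ℝ U2)
    (α : S → ℝ) (hα0 : ∀ x, 0 ≤ α x)
    (hαsup : ∃ α0 : ℝ, α0 < 1 ∧ ∀ x, α x ≤ α0)
    (p : S → S → ℝ → ℝ → ℝ)
    (hpnn : ∀ x y, ∀ r1 ∈ U1, ∀ r2 ∈ U2, 0 ≤ p x y r1 r2)
    (hpsum : ∀ x, ∀ r1 ∈ U1, ∀ r2 ∈ U2, (∑ y, p x y r1 r2) = 1)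
    (hpcont : ∀ x y, ContinuousOn (fun r : ℝ × ℝ => p x y r.1 r.2) (U1 ×ˢ U2))
    (hpbil : ∀ x y, ∃ ca cb cc cd : ℝ, ∀ r1 r2 : ℝ,
        p x y r1 r2 = ca * r1 * r2 + cb * r1 + cc * r2 + cd)
    (c : S → ℝ → ℝ → ℝ)
    (hccont : ∀ x, ContinuousOn (fun r : ℝ × ℝ => c x r.1 r.2) (U1 ×ˢ U2))
    (hcconv : ∀ x, ∀ r2 ∈ U2, ConvexOn ℝ U1 (fun r1 => c x r1 r2))
    (hcconc : ∀ x, ∀ r1 ∈ U1, ConcaveOn ℝ U2 (fun r2 => c x r1 r2))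
    (hcnn : ∀ x, ∀ r1 ∈ U1, ∀ r2 ∈ U2, 0 ≤ c x r1 r2) :
    (∃! Vp : S → ℝ, upperBellmanSD U1 U2 α p c Vp = Vp) ∧
    (∃! Vm : S → ℝ, lowerBellmanSD U1 U2 α p c Vm = Vm) ∧
    (∀ Vp Vm : S → ℝ, upperBellmanSD U1 U2 α p c Vp = Vp →
        lowerBellmanSD U1 U2 α p c Vm = Vm → ∀ x : S, Vp x = Vm x) := by
  obtain ⟨α0, hα01, hα⟩ := hαsup
  have hT : lowerBellmanSD U1 U2 α p c = upperBellmanSD U1 U2 α p c := by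
    funext V x
    obtain ⟨a, -, b, -, -, hup, hlow⟩ := exists_saddle_value (α := α) hU1ne hU1cp hU1cv
      hU2ne hU2cp hU2cv hpbil hccont hcconv hcconc V x
    rw [hup, hlow]
  have hK := upperBellmanSD_contracting hU1ne hU1cp hU1cv hU2ne hU2cp hU2cv hα0 hα01 hα
    hpnn hpsum hpbil hccont hcconv hcconc
  have hex : ∃! V : S → ℝ, upperBellmanSD U1 U2 α p c V = V :=
    ⟨hK.fixedPoint, hK.fixedPoint_isFixedPt, fun V hV => hK.fixedPoint_unique hV⟩
  rw [hT]
  exact ⟨hex, hex, fun Vp Vm hp hm x => congrFun (hex.unique hp hm) x⟩
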